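/- Let A be a C*-algebra, let F be a JB*-subtriple of A which is a Chebyshev subspace of A, and let e be a nonzero tripotent in F. Then A₀(e) = F₀(e), i.e., {x ∈ A : e e* x = 0 = x e* e} ⊆ F; consequently, every complete tripotent of F is a complete tripotent of A. -/

import Mathlib

/-!
Let `v` be the best approximation in `F` of a point `x` of the Peirce-0 space `A₀(e)`. The Peirce
projection `P₀(e)` is contractive, fixes `x` and preserves `F`, so `P₀(e) v` approximates `x` at
least as well as `v` does; hence `P₀(e) v = v`, and `x - v` lies in `A₀(e)`. Elements of `A₀(e)` are
orthogonal to `e`, and the norm of a sum of orthogonal elements is at most the maximum of their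
norms. If `x ≠ v`, then `v - c • e` is therefore, for a small scalar `c ≠ 0`, another best
approximation of `x`, contradicting uniqueness.
-/

open Set

section BestApproximation

variable {X : Type*} [SeminormedAddCommGroup X] {V : Set X}

/-- A Chebyshev set: every point of the space has exactly one best approximation in `V`. -/
def IsChebyshev (V : Set X) : Prop :=
  ∀ x : X, ∃! v : X, v ∈ V ∧ ‖x - v‖ = Metric.infDist x V

theorem IsChebyshev.exists_mem_forall_eq_of_norm_sub_le (hV : IsChebyshev V) (x : X) :
    ∃ v ∈ V, ∀ w ∈ V, ‖x - w‖ ≤ ‖x - v‖ → w = v := by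
  obtain ⟨v, ⟨hvV, hv⟩, hunique⟩ := hV x
  refine ⟨v, hvV, fun w hwV hw ↦ hunique w ⟨hwV, le_antisymm (hw.trans_eq hv) ?_⟩⟩
  exact (Metric.infDist_le_dist_of_mem hwV).trans_eq (dist_eq_norm x w)

end BestApproximation

section PeirceZero

variable {A : Type*} [NonUnitalRing A] [StarRing A] {e x : A}

/-- A tripotent for the triple product `{a,b,c} = (a b* c + c b* a) / 2`, i.e. a partial
isometry. -/
def IsTripotent (e : A) : Prop :=
  e * star e * e = e

namespace IsTripotent

protected theorem star (he : IsTripotent e) : IsTripotent (star e) := by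
  simpa only [IsTripotent, star_mul, mul_assoc] using congrArg star he

theorem isStarProjection_mul_star (he : IsTripotent e) : IsStarProjection (e * star e) where
  isIdempotentElem := by rw [IsIdempotentElem, ← mul_assoc, he]
  isSelfAdjoint := .mul_star_self e

theorem isStarProjection_star_mul (he : IsTripotent e) : IsStarProjection (star e * e) := by
  simpa only [star_star] using he.star.isStarProjection_mul_star

end IsTripotent

/-- The Peirce-0 space `A₀(e)`. -/
def peirceZero (e : A) : AddSubgroup A where
  carrier := {x | e * star e * x = 0 ∧ x * star e * e = 0}
  zero_mem' := by simp only [mem_ofPred_eq, mul_zero, zero_mul, and_self]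
  add_mem' hx hy := by
    constructor
    · rw [mul_add, hx.1, hy.1, add_zero]
    · rw [add_mul, add_mul, hx.2, hy.2, add_zero]
  neg_mem' hx := by
    constructor
    · rw [mul_neg, hx.1, neg_zero]
    · rw [neg_mul, neg_mul, hx.2, neg_zero]

/-- The Peirce-0 projection `P₀(e) y = (1 - e e*) y (1 - e* e)`, multiplied out because `A` need not
have a unit. -/
def peirceZeroProj (e : A) : A →+ A :=
  .mk' (fun y ↦ (y - e * star e * y) - (y - e * star e * y) * (star e * e))
    fun x y ↦ by noncomm_ring

theorem peirceZeroProj_apply (e y : A) :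
    peirceZeroProj e y = (y - e * star e * y) - (y - e * star e * y) * (star e * e) :=
  rfl

theorem peirceZeroProj_mem_peirceZero (he : IsTripotent e) (y : A) :
    peirceZeroProj e y ∈ peirceZero e := by
  have hleft (z : A) : e * star e * (z - e * star e * z) = 0 := by
    rw [mul_sub, ← mul_assoc, he.isStarProjection_mul_star.isIdempotentElem.eq, sub_self]
  have hright (z : A) : (z - z * (star e * e)) * (star e * e) = 0 := by
    rw [sub_mul, mul_assoc z, he.isStarProjection_star_mul.isIdempotentElem.eq, sub_self]
  constructor
  · rw [peirceZeroProj_apply, mul_sub, ← mul_assoc, hleft, zero_mul, sub_zero]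
  · rw [mul_assoc, peirceZeroProj_apply, hright]

theorem peirceZeroProj_eq_self_of_mem (hx : x ∈ peirceZero e) : peirceZeroProj e x = x := by
  rw [peirceZeroProj_apply, hx.1, sub_zero, ← mul_assoc, hx.2, sub_zero]

theorem star_mul_eq_zero_of_mem_peirceZero (he : IsTripotent e) (hx : x ∈ peirceZero e) :
    star e * x = 0 :=
  calc
    star e * x = star e * (e * star e * x) := by
      simpa only [star_star, mul_assoc] using congrArg (· * x) he.star.symm
    _ = 0 := by rw [hx.1, mul_zero]

theorem mul_star_eq_zero_of_mem_peirceZero (he : IsTripotent e) (hx : x ∈ peirceZero e) :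
    x * star e = 0 :=
  calc
    x * star e = x * star e * e * star e := by
      simpa only [star_star, mul_assoc] using congrArg (x * ·) he.star.symm
    _ = 0 := by rw [hx.2, zero_mul]

end PeirceZero

section TripleProduct

variable {𝕜 A : Type*} [DivisionRing 𝕜] [NonUnitalRing A] [StarRing A] [Module 𝕜 A]

variable (𝕜) in
/-- The triple product `{a,b,c} = (a b* c + c b* a) / 2`. In characteristic two it is the junk value
`0`. -/
def tripleProduct (a b c : A) : A :=
  (2 : 𝕜)⁻¹ • (a * star b * c + c * star b * a)

/-- A subspace closed under the triple product; a JB*-subtriple is one that is also norm-closed. -/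
def IsSubtriple (F : Submodule 𝕜 A) : Prop :=
  ∀ a ∈ F, ∀ b ∈ F, ∀ c ∈ F, tripleProduct 𝕜 a b c ∈ F

variable [NeZero (2 : 𝕜)]

variable (𝕜) in
theorem two_smul_tripleProduct (a b c : A) :
    (2 : 𝕜) • tripleProduct 𝕜 a b c = a * star b * c + c * star b * a :=
  smul_inv_smul₀ two_ne_zero _

variable (𝕜) in
theorem tripleProduct_self_right (a b : A) : tripleProduct 𝕜 a b a = a * star b * a := by
  rw [tripleProduct, ← two_smul 𝕜, inv_smul_smul₀ two_ne_zero]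

variable (𝕜) in
theorem peirceZeroProj_eq_tripleProduct (e y : A) :
    peirceZeroProj e y = y - (2 : 𝕜) • tripleProduct 𝕜 e e y +
      tripleProduct 𝕜 e (tripleProduct 𝕜 e y e) e := by
  simp only [peirceZeroProj_apply, two_smul_tripleProduct, tripleProduct_self_right, star_mul,
    star_star]
  noncomm_ring

theorem IsSubtriple.mapsTo_peirceZeroProj {F : Submodule 𝕜 A} (hF : IsSubtriple F) {e : A}
    (he : e ∈ F) : MapsTo (peirceZeroProj e) F F := by
  intro y hy
  rw [peirceZeroProj_eq_tripleProduct 𝕜]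
  exact F.add_mem (F.sub_mem hy (F.smul_mem 2 (hF e he e he y hy)))
    (hF e he _ (hF e he y hy e he) e he)

end TripleProduct

section Norm

variable {A : Type*} [NonUnitalNormedRing A] [StarRing A] [CStarRing A] {a b e p x : A}

theorem IsTripotent.norm_le_one (he : IsTripotent e) : ‖e‖ ≤ 1 := by
  rw [← abs_norm, ← sq_le_one_iff_abs_le_one, sq, ← CStarRing.norm_star_mul_self]
  exact he.isStarProjection_star_mul.norm_le

theorem norm_sub_mul_left_le_of_isStarProjection (hp : IsStarProjection p) (y : A) :
    ‖y - p * y‖ ≤ ‖y‖ := by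
  have hpy : p * (y - p * y) = 0 := by
    rw [mul_sub, ← mul_assoc, hp.isIdempotentElem.eq, sub_self]
  have hmul : ‖y - p * y‖ * ‖y - p * y‖ ≤ ‖y‖ * ‖y - p * y‖ :=
    calc
      ‖y - p * y‖ * ‖y - p * y‖ = ‖star (y - p * y) * (y - p * y)‖ :=
        CStarRing.norm_star_mul_self.symm
      _ = ‖star y * (y - p * y)‖ := by
        rw [star_sub, star_mul, hp.isSelfAdjoint.star_eq, sub_mul, mul_assoc, hpy, mul_zero,
          sub_zero]
      _ ≤ ‖y‖ * ‖y - p * y‖ := by simpa only [norm_star] using norm_mul_le (star y) (y - p * y)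
  rcases (norm_nonneg (y - p * y)).eq_or_lt with hzero | hpos
  · exact hzero.ge.trans (norm_nonneg y)
  · exact le_of_mul_le_mul_right hmul hpos

theorem norm_sub_mul_right_le_of_isStarProjection (hp : IsStarProjection p) (y : A) :
    ‖y - y * p‖ ≤ ‖y‖ := by
  rw [← norm_star, ← norm_star y, star_sub, star_mul, hp.isSelfAdjoint.star_eq]
  exact norm_sub_mul_left_le_of_isStarProjection hp (star y)

theorem norm_peirceZeroProj_le (he : IsTripotent e) (y : A) : ‖peirceZeroProj e y‖ ≤ ‖y‖ :=
  (norm_sub_mul_right_le_of_isStarProjection he.isStarProjection_star_mul _).trans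
    (norm_sub_mul_left_le_of_isStarProjection he.isStarProjection_mul_star y)

/- If `a` and `b` are orthogonal then so are `star a * a` and `star b * b`, whose sum is
`star (a + b) * (a + b)`; the C*-identity thus doubles the exponent at each step. -/
theorem norm_add_pow_two_pow_le_of_orthogonal (hleft : star a * b = 0) (hright : b * star a = 0)
    (n : ℕ) : ‖a + b‖ ^ 2 ^ n ≤ ‖a‖ ^ 2 ^ n + ‖b‖ ^ 2 ^ n := by
  induction n generalizing a b with
  | zero => simpa only [pow_zero, pow_one] using norm_add_le a b
  | succ n ih =>
    have hleft' : star b * a = 0 := by simpa using congrArg star hleft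
    have hright' : a * star b = 0 := by simpa using congrArg star hright
    have hsum : star (a + b) * (a + b) = star a * a + star b * b := by
      rw [star_add, add_mul, mul_add, mul_add, hleft, hleft', add_zero, zero_add]
    have hpow (c : A) : ‖c‖ ^ 2 ^ (n + 1) = ‖star c * c‖ ^ 2 ^ n := by
      rw [CStarRing.norm_star_mul_self, ← sq, ← pow_mul, pow_succ']
    rw [hpow, hpow, hpow, hsum]
    apply ih
    · rw [star_mul, star_star, mul_assoc, ← mul_assoc a, hright', zero_mul, mul_zero]
    · rw [star_mul, star_star, mul_assoc, ← mul_assoc b, hright, zero_mul, mul_zero]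

theorem norm_add_le_max_of_orthogonal (hleft : star a * b = 0) (hright : b * star a = 0) :
    ‖a + b‖ ≤ max ‖a‖ ‖b‖ := by
  set M := max ‖a‖ ‖b‖
  have hbound (n : ℕ) : ‖a + b‖ ^ 2 ^ n ≤ 2 * M ^ 2 ^ n :=
    calc
      ‖a + b‖ ^ 2 ^ n ≤ ‖a‖ ^ 2 ^ n + ‖b‖ ^ 2 ^ n :=
        norm_add_pow_two_pow_le_of_orthogonal hleft hright n
      _ ≤ M ^ 2 ^ n + M ^ 2 ^ n := by
        gcongr
        exacts [le_max_left _ _, le_max_right _ _]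
      _ = 2 * M ^ 2 ^ n := (two_mul _).symm
  rcases (le_max_of_le_left (norm_nonneg a) : 0 ≤ M).eq_or_lt with hzero | hpos
  · have hdouble : ‖a + b‖ ≤ 2 * M := by simpa only [pow_zero, pow_one] using hbound 0
    linarith
  by_contra! hlt
  have hratio : 1 < ‖a + b‖ / M := (one_lt_div hpos).2 hlt
  obtain ⟨n, hn⟩ := pow_unbounded_of_one_lt 2 hratio
  have hratio_le : (‖a + b‖ / M) ^ 2 ^ n ≤ 2 := by
    rw [div_pow, div_le_iff₀ (by positivity)]
    exact hbound n
  exact (hn.trans_le (pow_le_pow_right₀ hratio.le Nat.lt_two_pow_self.le)).not_ge hratio_le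

section NormedSpace

variable {𝕜 : Type*}

theorem norm_add_smul_le_of_mem_peirceZero [NormedField 𝕜] [NormedSpace 𝕜 A] [IsScalarTower 𝕜 A A]
    [SMulCommClass 𝕜 A A] (he : IsTripotent e) (hx : x ∈ peirceZero e) {c : 𝕜} (hc : ‖c‖ ≤ ‖x‖) :
    ‖x + c • e‖ ≤ ‖x‖ := by
  have hleft : star x * (c • e) = 0 := by
    rw [mul_smul_comm, ← star_star e, ← star_mul, star_mul_eq_zero_of_mem_peirceZero he hx,
      star_zero, smul_zero]
  have hright : c • e * star x = 0 := by
    rw [smul_mul_assoc, ← star_star e, ← star_mul, mul_star_eq_zero_of_mem_peirceZero he hx,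
      star_zero, smul_zero]
  have hnorm : ‖c • e‖ ≤ ‖x‖ := by
    rw [norm_smul]
    exact (mul_le_of_le_one_right (norm_nonneg c) he.norm_le_one).trans hc
  exact (norm_add_le_max_of_orthogonal hleft hright).trans (max_le le_rfl hnorm)

theorem peirce_zero_eq_of_cebysev_general [NontriviallyNormedField 𝕜] [NormedSpace 𝕜 A]
    [IsScalarTower 𝕜 A A] [SMulCommClass 𝕜 A A] {F : Submodule 𝕜 A} (hF : IsChebyshev (F : Set A))
    (heF : e ∈ F) (he0 : e ≠ 0) (he : IsTripotent e) (hproj : MapsTo (peirceZeroProj e) F F) :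
    (peirceZero e : Set A) ⊆ F := by
  intro x hx
  obtain ⟨v, hvF, hbest⟩ := hF.exists_mem_forall_eq_of_norm_sub_le x
  have hfixed : peirceZeroProj e v = v := by
    refine hbest _ (hproj hvF) ?_
    calc
      ‖x - peirceZeroProj e v‖ = ‖peirceZeroProj e (x - v)‖ := by
        rw [map_sub, peirceZeroProj_eq_self_of_mem hx]
      _ ≤ ‖x - v‖ := norm_peirceZeroProj_le he _
  have hsub : x - v ∈ peirceZero e :=
    sub_mem hx (hfixed ▸ peirceZeroProj_mem_peirceZero he v)
  suffices x = v from this ▸ hvF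
  by_contra hne
  obtain ⟨c, hc0, hc⟩ := NormedField.exists_norm_lt 𝕜 (norm_sub_pos_iff.2 hne)
  have hperturbed : v - c • e = v := by
    refine hbest _ (F.sub_mem hvF (F.smul_mem c heF)) ?_
    calc
      ‖x - (v - c • e)‖ = ‖x - v + c • e‖ := by rw [sub_sub_eq_add_sub, add_sub_right_comm]
      _ ≤ ‖x - v‖ := norm_add_smul_le_of_mem_peirceZero he hsub hc.le
  exact smul_ne_zero (norm_pos_iff.1 hc0) he0 (sub_eq_self.1 hperturbed)

end NormedSpace

end Norm

/-- Let `A` be a C*-algebra, `F` a JB*-subtriple of `A` which is a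
Chebyshev subspace of `A`, and `e` a nonzero tripotent (partial isometry) in `F`.
Then `A₀(e) ⊆ F` (so `A₀(e) = F₀(e)`); consequently, every complete tripotent of
`F` is a complete tripotent of `A`. -/
theorem peirce_zero_eq_of_cebysev
    {A : Type*} [NonUnitalNormedRing A] [StarRing A] [CStarRing A]
    [NormedSpace ℂ A] [IsScalarTower ℂ A A] [SMulCommClass ℂ A A]
    [StarModule ℂ A] [CompleteSpace A]
    (F : Submodule ℂ A) (hFclosed : IsClosed (F : Set A))
    (hFtriple : ∀ x ∈ F, ∀ y ∈ F, ∀ z ∈ F,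
      (2 : ℂ)⁻¹ • (x * star y * z + z * star y * x) ∈ F)
    (hCheb : ∀ x : A, ∃! v : A, v ∈ F ∧ ‖x - v‖ = Metric.infDist x (F : Set A))
    (e : A) (he : e ∈ F) (he0 : e ≠ 0) (htrip : e * star e * e = e) :
    ({x : A | e * star e * x = 0 ∧ x * star e * e = 0} ⊆ (F : Set A)) ∧
    ((∀ y ∈ F, e * star e * y = 0 → y * star e * e = 0 → y = 0) →
      ∀ x : A, e * star e * x = 0 → x * star e * e = 0 → x = 0) := by
  have h : (peirceZero e : Set A) ⊆ F :=
    peirce_zero_eq_of_cebysev_general hCheb he he0 htrip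
      (IsSubtriple.mapsTo_peirceZeroProj hFtriple he)
  exact ⟨h, fun hcomplete x hx₁ hx₂ ↦ hcomplete x (h ⟨hx₁, hx₂⟩) hx₁ hx₂⟩
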